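/- arXiv:1901.04922 — 2 statements merged into one kernel-verified Lean document; each statement's English description precedes it below -/
import Mathlib

section
/- For a purely periodic run of the p-adic Jacobi–Perron algorithm with period N, every root z ∈ K of the characteristic polynomial P(X) with z ≠ μ satisfies ‖z‖ < 1, whereas the root μ = α_0^{(1)} α_1^{(1)} ⋯ α_{N-1}^{(1)} satisfies |μ|_p > 1. -/
/-!
Let `x` solve the linear recurrence satisfied by the convergents. The algorithm is designed so that
the linear form `Lₙ = α_n^{(1)} x_{n-1} + ⋯ + α_n^{(m)} x_{n-m} + x_{n-m-1}` satisfies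
`Lₙ₊₁ = α_{n+1}^{(1)} Lₙ`; over one period it is therefore multiplied by `μ`. A left eigenvector of
`𝓜` for the eigenvalue `z` gives a solution with `x_{k+N} = z x_k`, for which one period multiplies
the form by `z`. If `z ≠ μ` the form must vanish, and subtracting the recurrence leaves
`xₙ = -∑ⱼ (α_n^{(j)} - a_n^{(j)}) x_{n-j}`, a recurrence of order `m` whose coefficients have norm
less than `1`. In an ultrametric field its solutions stay strictly below the largest initial value
`‖x_{-j}‖`, while `x_{-j+jN} = z^j x_{-j}`; hence `‖z‖ < 1`. Each factor of `μ` has norm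
greater than `1`, being the inverse of some `α_n^{(m)} - a_n^{(m)}`.
-/

open Finset Filter

/-- `q` belongs to `ℤ[1/p]`. -/
def InZInvP (p : ℕ) (q : ℚ) : Prop := ∃ (z : ℤ) (k : ℕ), q = (z : ℚ) / (p : ℚ) ^ k

/-- `a` is the Browkin `s`-function value of `x`:
`a ∈ ℤ[1/p]`, `|a|_∞ < p/2` and `|x - a|_p < 1`. -/
def IsSValue (p : ℕ) [Fact p.Prime] (x : ℚ_[p]) (a : ℚ) : Prop :=
  InZInvP p a ∧ |a| < (p : ℚ) / 2 ∧ ‖x - (a : ℚ_[p])‖ < 1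

/-- An infinite run of the `p`-adic Jacobi–Perron algorithm with complete quotients
`α n i` and partial quotients `a n i` (`n ≥ 0`, `i = 1,…,m`). -/
def JPRun (p : ℕ) [Fact p.Prime] (m : ℕ) (α : ℕ → ℕ → ℚ_[p]) (a : ℕ → ℕ → ℚ) : Prop :=
  ∀ n : ℕ,
    (∀ i ∈ Finset.Icc 1 m, IsSValue p (α n i) (a n i)) ∧
    α n m ≠ ((a n m : ℚ) : ℚ_[p]) ∧
    α (n + 1) 1 = (α n m - ((a n m : ℚ) : ℚ_[p]))⁻¹ ∧
    ∀ i ∈ Finset.Icc 2 m,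
      α (n + 1) i = (α n (i - 1) - ((a n (i - 1) : ℚ) : ℚ_[p])) / (α n m - ((a n m : ℚ) : ℚ_[p]))

/-- `A : ℤ → ℕ → ℚ` is the family of convergent numerators/denominators attached to the
partial quotients `a`: `A (-j) i = δ_{ij}` for `j = 1,…,m+1`, and for `n ≥ 0`,
`A n i = Σ_{j=1}^m a n j * A (n-j) i + A (n-m-1) i`. -/
def JPConv (m : ℕ) (a : ℕ → ℕ → ℚ) (A : ℤ → ℕ → ℚ) : Prop :=
  (∀ i ∈ Finset.Icc 1 (m + 1), ∀ j ∈ Finset.Icc 1 (m + 1),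
      A (-(j : ℤ)) i = if i = j then 1 else 0) ∧
  (∀ n : ℕ, ∀ i ∈ Finset.Icc 1 (m + 1),
      A n i = (∑ j ∈ Finset.Icc 1 m, a n j * A ((n : ℤ) - j) i) + A ((n : ℤ) - m - 1) i)

namespace JacobiPerron

section Recurrence

variable {R : Type*} [CommRing R]

/-- The form `c_n^{(1)} x_{n-1} + ⋯ + c_n^{(m)} x_{n-m} + x_{n-m-1}` in a two-sided sequence `x`.
It is the right-hand side of the recurrence when `c` are the partial quotients, and the form
multiplied by `α_{n+1}^{(1)}` at each step when `c` are the complete quotients. -/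
def linearForm (m : ℕ) (c : ℕ → ℕ → R) (n : ℕ) : (ℤ → R) →ₗ[R] R :=
  ∑ j ∈ Icc 1 m, c n j • LinearMap.proj ((n : ℤ) - j) + LinearMap.proj ((n : ℤ) - m - 1)

theorem linearForm_apply (m : ℕ) (c : ℕ → ℕ → R) (n : ℕ) (x : ℤ → R) :
    linearForm m c n x = ∑ j ∈ Icc 1 m, c n j * x ((n : ℤ) - j) + x ((n : ℤ) - m - 1) := by
  simp [linearForm]

/-- The solutions of the Jacobi–Perron recurrence with partial quotients `b`. The recurrence is
imposed at the indices `n ≥ 0` only, so a solution is determined on `[-(m+1), ∞)` by its values at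
`-1, …, -(m+1)` and is arbitrary further to the left. -/
def solutions (m : ℕ) (b : ℕ → ℕ → R) : Submodule R (ℤ → R) where
  carrier := {x | ∀ n : ℕ, x n = linearForm m b n x}
  zero_mem' n := by simp
  add_mem' hx hy n := by rw [Pi.add_apply, hx n, hy n, map_add]
  smul_mem' r x hx n := by rw [Pi.smul_apply, hx n, map_smul]

/-- The algebraic relations between the complete quotients `α` and the partial quotients `b` of a
Jacobi–Perron run, with `1 / (α_n^{(m)} - b_n^{(m)})` written as `α_{n+1}^{(1)}` so that no division
occurs. -/
structure IsRun (m : ℕ) (α b : ℕ → ℕ → R) : Prop where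
  sub_mul_apply_one : ∀ n, (α n m - b n m) * α (n + 1) 1 = 1
  apply_add_one : ∀ n, ∀ i ∈ Ico 1 m, α (n + 1) (i + 1) = (α n i - b n i) * α (n + 1) 1

/-- The convergents `A_n^{(i)}`, `1 ≤ i ≤ m + 1`: the solutions of the recurrence whose initial
values are the standard basis vectors. -/
structure IsConvergents (m : ℕ) (b : ℕ → ℕ → R) (A : ℤ → ℕ → R) : Prop where
  initial : ∀ i ∈ Icc 1 (m + 1), ∀ j ∈ Icc 1 (m + 1), A (-(j : ℤ)) i = if i = j then 1 else 0
  mem_solutions : ∀ i ∈ Icc 1 (m + 1), (A · i) ∈ solutions m b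

variable {m N n : ℕ} {α b : ℕ → ℕ → R} {x y : ℤ → R}

theorem IsRun.map {S : Type*} [CommRing S] (h : IsRun m α b) (φ : R →+* S) :
    IsRun m (fun n i ↦ φ (α n i)) (fun n i ↦ φ (b n i)) where
  sub_mul_apply_one n := by simpa using congrArg φ (h.sub_mul_apply_one n)
  apply_add_one n i hi := by simpa using congrArg φ (h.apply_add_one n i hi)

theorem IsConvergents.map {S : Type*} [CommRing S] {A : ℤ → ℕ → R} (h : IsConvergents m b A)
    (φ : R →+* S) : IsConvergents m (fun n i ↦ φ (b n i)) (fun k i ↦ φ (A k i)) where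
  initial i hi j hj := by simp [h.initial i hi j hj, apply_ite φ]
  mem_solutions i hi n := by
    simpa [linearForm_apply] using congrArg φ (h.mem_solutions i hi n)

theorem window_induction {P : ℤ → Prop} (initial : ∀ j ∈ Icc 1 m, P (-(j : ℤ)))
    (step : ∀ n : ℕ, (∀ j ∈ Icc 1 m, P ((n : ℤ) - j)) → P n) {k : ℤ} (hk : -(m : ℤ) ≤ k) :
    P k := by
  have hneg : ∀ l : ℤ, -(m : ℤ) ≤ l → l < 0 → P l := fun l hl hl0 ↦ by
    have := initial l.natAbs (mem_Icc.mpr (by omega))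
    rwa [show -(l.natAbs : ℤ) = l by omega] at this
  have hnat : ∀ n : ℕ, P n := fun n ↦ by
    induction n using Nat.strong_induction_on with
    | _ n ih =>
      refine step n fun j hj ↦ ?_
      rw [mem_Icc] at hj
      rcases lt_or_ge n j with hnj | hjn
      · exact hneg _ (by omega) (by omega)
      · rw [← Nat.cast_sub hjn]
        exact ih _ (by omega)
  rcases lt_or_ge k 0 with hk0 | hk0
  · exact hneg k hk hk0
  · exact Int.toNat_of_nonneg hk0 ▸ hnat k.toNat

theorem linearForm_congr (h : ∀ j ∈ Icc 1 (m + 1), x ((n : ℤ) - j) = y ((n : ℤ) - j)) :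
    linearForm m b n x = linearForm m b n y := by
  have hlast := h (m + 1) (by simp)
  rw [Nat.cast_succ, ← sub_sub] at hlast
  rw [linearForm_apply, linearForm_apply, hlast]
  congr 1
  refine sum_congr rfl fun j hj ↦ ?_
  rw [h j (Icc_subset_Icc_right m.le_succ hj)]

theorem linearForm_shift (hb : ∀ i ∈ Icc 1 m, b (n + N) i = b n i) :
    linearForm m b n (fun k ↦ x (k + N)) = linearForm m b (n + N) x := by
  rw [linearForm_apply, linearForm_apply, Nat.cast_add]
  congr 1
  · refine sum_congr rfl fun j hj ↦ ?_
    rw [hb j hj, sub_add_eq_add_sub]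
  · congr 1
    ring

theorem eq_of_mem_solutions (hx : x ∈ solutions m b) (hy : y ∈ solutions m b)
    (initial : ∀ j ∈ Icc 1 (m + 1), x (-(j : ℤ)) = y (-(j : ℤ))) {k : ℤ}
    (hk : -((m + 1 : ℕ) : ℤ) ≤ k) : x k = y k :=
  window_induction (P := fun k ↦ x k = y k) initial
    (fun n ih ↦ by rw [hx n, hy n, linearForm_congr ih]) hk

theorem shift_mem_solutions (hx : x ∈ solutions m b)
    (hb : ∀ n, ∀ i ∈ Icc 1 m, b (n + N) i = b n i) : (fun k ↦ x (k + N)) ∈ solutions m b :=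
  fun n ↦ by rw [linearForm_shift (hb n), ← hx (n + N), Nat.cast_add]

theorem apply_add_eq_mul_of_mem_solutions {z : R} (hx : x ∈ solutions m b)
    (hb : ∀ n, ∀ i ∈ Icc 1 m, b (n + N) i = b n i)
    (hz : ∀ j ∈ Icc 1 (m + 1), x (N - j) = z * x (-(j : ℤ))) {k : ℤ}
    (hk : -((m + 1 : ℕ) : ℤ) ≤ k) : x (k + N) = z * x k :=
  eq_of_mem_solutions (shift_mem_solutions hx hb) (Submodule.smul_mem _ z hx)
    (fun j hj ↦ by simpa [neg_add_eq_sub] using hz j hj) hk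

theorem apply_add_mul_eq_pow_mul {M : Type*} [Monoid M] {x : ℤ → M} {z : M} {k₀ : ℤ}
    (hz : ∀ k, k₀ ≤ k → x (k + N) = z * x k) {k : ℤ} (hk : k₀ ≤ k) (t : ℕ) :
    x (k + t * N) = z ^ t * x k := by
  induction t with
  | zero => simp
  | succ t ih =>
    rw [pow_succ', mul_assoc, ← ih, ← hz _ (hk.trans (le_add_of_nonneg_right (by positivity)))]
    congr 1
    push_cast
    ring

theorem linearForm_eq_add_sum_sub_mul (hx : x ∈ solutions m b) (n : ℕ) :
    linearForm m α n x = x n + ∑ j ∈ Icc 1 m, (α n j - b n j) * x ((n : ℤ) - j) := by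
  rw [hx n, linearForm_apply, linearForm_apply]
  simp only [sub_mul, sum_sub_distrib]
  ring

theorem IsRun.linearForm_succ (h : IsRun m α b) (hm : 1 ≤ m) (hx : x ∈ solutions m b) (n : ℕ) :
    linearForm m α (n + 1) x = α (n + 1) 1 * linearForm m α n x := by
  obtain ⟨k, rfl⟩ := Nat.exists_eq_add_of_le' hm
  have hsum : ∑ j ∈ Icc 1 (k + 1), α (n + 1) j * x (((n + 1 : ℕ) : ℤ) - j) =
      α (n + 1) 1 * x n + ∑ j ∈ Icc 1 k, α (n + 1) (j + 1) * x ((n : ℤ) - j) := by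
    rw [← Ico_add_one_right_eq_Icc, ← Ico_add_one_right_eq_Icc, sum_eq_sum_Ico_succ_bot (by omega),
      ← sum_Ico_add']
    simp
  rw [linearForm_apply, hsum, linearForm_eq_add_sum_sub_mul hx, sum_Icc_succ_top (by omega),
    mul_add, mul_add, mul_sum, add_assoc]
  congr 2
  · refine sum_congr rfl fun j hj ↦ ?_
    rw [mem_Icc] at hj
    rw [h.apply_add_one n j (mem_Ico.mpr (by omega))]
    ring
  · rw [← mul_assoc, mul_comm (α (n + 1) 1), h.sub_mul_apply_one n, one_mul]
    congr 1
    push_cast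
    ring

theorem IsRun.linearForm_eq_prod_mul (h : IsRun m α b) (hm : 1 ≤ m) (hx : x ∈ solutions m b)
    (n : ℕ) : linearForm m α n x = (∏ j ∈ range n, α (j + 1) 1) * linearForm m α 0 x := by
  induction n with
  | zero => simp
  | succ n ih => rw [h.linearForm_succ hm hx, ih, prod_range_succ]; ring

theorem prod_range_succ_eq_prod_range {M : Type*} [CommMonoid M] {f : ℕ → M} (hf : f N = f 0) :
    ∏ j ∈ range N, f (j + 1) = ∏ j ∈ range N, f j := by
  cases N with
  | zero => rfl
  | succ N => rw [prod_range_succ, prod_range_succ', hf]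

theorem IsRun.linearForm_zero_eq_zero [IsDomain R] {z : R} (h : IsRun m α b) (hm : 1 ≤ m)
    (hα : ∀ i ∈ Icc 1 m, α N i = α 0 i) (hx : x ∈ solutions m b)
    (hz : ∀ j ∈ Icc 1 (m + 1), x (N - j) = z * x (-(j : ℤ)))
    (hzμ : z ≠ ∏ j ∈ range N, α j 1) : linearForm m α 0 x = 0 := by
  have hμ : linearForm m α N x = (∏ j ∈ range N, α j 1) * linearForm m α 0 x := by
    rw [h.linearForm_eq_prod_mul hm hx,
      prod_range_succ_eq_prod_range (f := (α · 1)) (hα 1 (by simpa))]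
  have hN : linearForm m α N x = z * linearForm m α 0 x :=
    calc linearForm m α N x = linearForm m α 0 (fun k ↦ x (k + N)) := by
          rw [linearForm_shift (by simpa using hα), zero_add]
      _ = linearForm m α 0 (z • x) :=
          linearForm_congr fun j hj ↦ by simpa [neg_add_eq_sub] using hz j hj
      _ = z * linearForm m α 0 x := map_smul ..
  exact (mul_eq_mul_right_iff.mp (hN.symm.trans hμ)).resolve_left hzμ

theorem apply_neg_succ_eq_linearForm_zero (hx : ∀ j ∈ Icc 1 m, x (-(j : ℤ)) = 0) :
    x (-((m + 1 : ℕ) : ℤ)) = linearForm m α 0 x := by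
  rw [linearForm_apply, sum_eq_zero fun j hj ↦ by simp [hx j hj], zero_add]
  congr 1
  push_cast
  ring

end Recurrence

section Contraction

theorem norm_sum_mul_lt {ι S : Type*} [SeminormedRing S] [IsUltrametricDist S] {s : Finset ι}
    {c y : ι → S} {r : ℝ} (hr : 0 < r) (hc : ∀ i ∈ s, ‖c i‖ < 1) (hy : ∀ i ∈ s, ‖y i‖ ≤ r) :
    ‖∑ i ∈ s, c i * y i‖ < r := by
  obtain rfl | hs := s.eq_empty_or_nonempty
  · simpa
  obtain ⟨i, hi, hle⟩ := IsUltrametricDist.exists_norm_finsetSum_le_of_nonempty hs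
    (fun i ↦ c i * y i)
  calc ‖∑ i ∈ s, c i * y i‖ ≤ ‖c i‖ * ‖y i‖ := hle.trans (norm_mul_le _ _)
    _ ≤ ‖c i‖ * r := by gcongr; exact hy i hi
    _ < r := mul_lt_of_lt_one_left hr (hc i hi)

theorem norm_apply_lt_of_contracting {S : Type*} [SeminormedRing S] [IsUltrametricDist S] {m : ℕ}
    {c : ℕ → ℕ → S} {x : ℤ → S} (hc : ∀ n, ∀ j ∈ Icc 1 m, ‖c n j‖ < 1)
    (hx : ∀ n : ℕ, x n = ∑ j ∈ Icc 1 m, c n j * x ((n : ℤ) - j)) {r : ℝ} (hr : 0 < r)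
    (initial : ∀ j ∈ Icc 1 m, ‖x (-(j : ℤ))‖ ≤ r) (n : ℕ) : ‖x n‖ < r := by
  have hstep (n : ℕ) (h : ∀ j ∈ Icc 1 m, ‖x ((n : ℤ) - j)‖ ≤ r) : ‖x n‖ < r :=
    hx n ▸ norm_sum_mul_lt hr (hc n) h
  refine hstep n fun j hj ↦ ?_
  rw [mem_Icc] at hj
  exact window_induction (P := fun k ↦ ‖x k‖ ≤ r) initial (fun n h ↦ (hstep n h).le) (by omega)

variable {K : Type*} [NormedField K] [IsUltrametricDist K] {m N : ℕ} {α b c : ℕ → ℕ → K}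
  {x : ℤ → K} {z : K}

theorem norm_lt_one_of_contracting (hN : 1 ≤ N) (hc : ∀ n, ∀ j ∈ Icc 1 m, ‖c n j‖ < 1)
    (hx : ∀ n : ℕ, x n = ∑ j ∈ Icc 1 m, c n j * x ((n : ℤ) - j))
    (hz : ∀ k, -(m : ℤ) ≤ k → x (k + N) = z * x k)
    (hx₀ : ∃ j ∈ Icc 1 m, x (-(j : ℤ)) ≠ 0) : ‖z‖ < 1 := by
  obtain ⟨i, hi, hxi⟩ := hx₀
  obtain ⟨j, hj, hmax⟩ := exists_max_image (Icc 1 m) (fun j ↦ ‖x (-(j : ℤ))‖) ⟨i, hi⟩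
  have hpos : 0 < ‖x (-(j : ℤ))‖ := (norm_pos_iff.mpr hxi).trans_le (hmax i hi)
  have hj' := mem_Icc.mp hj
  have hlt : ‖z‖ ^ j * ‖x (-(j : ℤ))‖ < ‖x (-(j : ℤ))‖ :=
    calc ‖z‖ ^ j * ‖x (-(j : ℤ))‖ = ‖x (-(j : ℤ) + j * N)‖ := by
          rw [apply_add_mul_eq_pow_mul hz (by omega), norm_mul, norm_pow]
      _ = ‖x ((j * N - j : ℕ) : ℤ)‖ := by
          rw [Nat.cast_sub (Nat.le_mul_of_pos_right j hN), neg_add_eq_sub, Nat.cast_mul]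
      _ < ‖x (-(j : ℤ))‖ := norm_apply_lt_of_contracting hc hx hpos hmax _
  by_contra! h
  exact hlt.not_ge (le_mul_of_one_le_left hpos.le (one_le_pow₀ h))

theorem IsRun.norm_lt_one_of_mem_solutions (h : IsRun m α b) (hm : 1 ≤ m) (hN : 1 ≤ N)
    (hlt : ∀ n, ∀ i ∈ Icc 1 m, ‖α n i - b n i‖ < 1) (hα : ∀ i ∈ Icc 1 m, α N i = α 0 i)
    (hb : ∀ n, ∀ i ∈ Icc 1 m, b (n + N) i = b n i) (hx : x ∈ solutions m b)
    (hx₀ : ∃ j ∈ Icc 1 (m + 1), x (-(j : ℤ)) ≠ 0)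
    (hz : ∀ j ∈ Icc 1 (m + 1), x (N - j) = z * x (-(j : ℤ)))
    (hzμ : z ≠ ∏ j ∈ range N, α j 1) : ‖z‖ < 1 := by
  have hform₀ : linearForm m α 0 x = 0 := h.linearForm_zero_eq_zero hm hα hx hz hzμ
  have hform (n : ℕ) : linearForm m α n x = 0 := by
    rw [h.linearForm_eq_prod_mul hm hx, hform₀, mul_zero]
  have hrec (n : ℕ) : x n = ∑ j ∈ Icc 1 m, (b n j - α n j) * x ((n : ℤ) - j) := by
    have hsum := (linearForm_eq_add_sum_sub_mul hx n).symm.trans (hform n)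
    rw [eq_neg_of_add_eq_zero_left hsum, ← sum_neg_distrib]
    simp only [← neg_mul, neg_sub]
  have hx₁ : ∃ j ∈ Icc 1 m, x (-(j : ℤ)) ≠ 0 := by
    by_contra! hzero
    obtain ⟨j, hj, hxj⟩ := hx₀
    rcases (mem_Icc.mp hj).2.lt_or_eq with hjm | rfl
    · exact hxj (hzero j (mem_Icc.mpr ⟨(mem_Icc.mp hj).1, Nat.lt_succ_iff.mp hjm⟩))
    · exact hxj ((apply_neg_succ_eq_linearForm_zero hzero).trans hform₀)
  exact norm_lt_one_of_contracting hN (fun n j hj ↦ norm_sub_rev (α n j) _ ▸ hlt n j hj) hrec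
    (fun k hk ↦ apply_add_eq_mul_of_mem_solutions hx hb hz (by omega)) hx₁

end Contraction

theorem IsRun.one_lt_norm_prod {F : Type*} [NormedField F] {m N : ℕ} {α b : ℕ → ℕ → F}
    (h : IsRun m α b) (hN : 1 ≤ N) (hlt : ∀ n, ‖α n m - b n m‖ < 1) (hα : α N 1 = α 0 1) :
    1 < ‖∏ j ∈ range N, α j 1‖ := by
  have hone : ∀ n, 1 < ‖α (n + 1) 1‖ := fun n ↦ by
    rw [eq_inv_of_mul_eq_one_right (h.sub_mul_apply_one n), norm_inv]
    exact (one_lt_inv₀ (norm_pos_iff.mpr (left_ne_zero_of_mul_eq_one (h.sub_mul_apply_one n)))).mpr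
      (hlt n)
  rw [← prod_range_succ_eq_prod_range (f := (α · 1)) hα, norm_prod]
  simpa using prod_lt_prod_of_nonempty (f := fun _ ↦ (1 : ℝ)) (fun _ _ ↦ one_pos)
    (fun j _ ↦ hone j) (nonempty_range_iff.mpr (Nat.one_le_iff_ne_zero.mp hN))

theorem exists_vecMul_eq_smul_of_isRoot_charpoly {ι K : Type*} [Fintype ι] [DecidableEq ι]
    [Field K] {M : Matrix ι ι K} {z : K} (hz : M.charpoly.IsRoot z) :
    ∃ w : ι → K, w ≠ 0 ∧ Matrix.vecMul w M = z • w := by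
  rw [← Matrix.charpoly_transpose, ← Matrix.charpoly_toLin',
    ← Module.End.hasEigenvalue_iff_isRoot_charpoly] at hz
  obtain ⟨w, hw⟩ := hz.exists_hasEigenvector
  exact ⟨w, hw.2, by simpa [Matrix.mulVec_transpose] using hw.apply_eq_smul⟩

theorem IsConvergents.exists_solution_of_isRoot_charpoly {K : Type*} [Field K] {m N : ℕ}
    {b : ℕ → ℕ → K} {A : ℤ → ℕ → K} (hA : IsConvergents m b A)
    {M : Matrix (Fin (m + 1)) (Fin (m + 1)) K}
    (hM : ∀ i j : Fin (m + 1), M i j = A ((N : ℤ) - ((j : ℕ) + 1)) ((i : ℕ) + 1))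
    {z : K} (hz : M.charpoly.IsRoot z) :
    ∃ x ∈ solutions m b, (∃ j ∈ Icc 1 (m + 1), x (-(j : ℤ)) ≠ 0) ∧
      ∀ j ∈ Icc 1 (m + 1), x (N - j) = z * x (-(j : ℤ)) := by
  obtain ⟨w, hw₀, hw⟩ := exists_vecMul_eq_smul_of_isRoot_charpoly hz
  let x : ℤ → K := ∑ i : Fin (m + 1), w i • (A · ((i : ℕ) + 1))
  have hx (k : ℤ) : x k = ∑ i, w i * A k (i + 1) := by simp [x]
  have mem_Icc_succ (i : Fin (m + 1)) : (i : ℕ) + 1 ∈ Icc 1 (m + 1) :=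
    mem_Icc.mpr (by omega)
  have hinit (j : Fin (m + 1)) : x (-((j + 1 : ℕ) : ℤ)) = w j := by
    simp only [hx, hA.initial _ (mem_Icc_succ _) _ (mem_Icc_succ j)]
    simp [Fin.val_inj]
  refine ⟨x, Submodule.sum_mem _ fun i _ ↦
    Submodule.smul_mem _ _ (hA.mem_solutions _ (mem_Icc_succ i)), ?_, fun j hj ↦ ?_⟩
  · obtain ⟨j, hj⟩ := Function.ne_iff.mp hw₀
    exact ⟨j + 1, mem_Icc_succ j, (hinit j).trans_ne hj⟩
  · obtain ⟨j, rfl⟩ : ∃ i : Fin (m + 1), (i : ℕ) + 1 = j := by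
      rw [mem_Icc] at hj
      exact ⟨⟨j - 1, by omega⟩, Nat.sub_add_cancel hj.1⟩
    rw [hinit, hx]
    simpa [Matrix.vecMul, dotProduct, hM] using congrFun hw j

end JacobiPerron

theorem JPRun.isRun {p m : ℕ} [Fact p.Prime] {α : ℕ → ℕ → ℚ_[p]} {a : ℕ → ℕ → ℚ}
    (h : JPRun p m α a) : JacobiPerron.IsRun m α (fun n i ↦ algebraMap ℚ ℚ_[p] (a n i)) where
  sub_mul_apply_one n := by
    obtain ⟨-, hne, hone, -⟩ := h n
    rw [hone]
    exact mul_inv_cancel₀ (sub_ne_zero.mpr hne)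
  apply_add_one n i hi := by
    obtain ⟨-, -, hone, hsucc⟩ := h n
    rw [mem_Ico] at hi
    rw [hsucc (i + 1) (mem_Icc.mpr (by omega)), hone, div_eq_mul_inv]
    rfl

theorem JPConv.isConvergents {m : ℕ} {a : ℕ → ℕ → ℚ} {A : ℤ → ℕ → ℚ} (h : JPConv m a A) :
    JacobiPerron.IsConvergents m a A where
  initial := h.1
  mem_solutions i hi n := (h.2 n i hi).trans (JacobiPerron.linearForm_apply m a n (A · i)).symm

open JacobiPerron in
theorem jacobiPerron_periodic_roots_norms_general {R F K : Type*} [CommRing R] [NormedField F]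
    [IsUltrametricDist F] [Algebra R F] [NormedField K] [Algebra F K]
    (hext : ∀ x : F, ‖algebraMap F K x‖ = ‖x‖) {m N : ℕ} (hm : 1 ≤ m) (hN : 1 ≤ N)
    {α : ℕ → ℕ → F} {a : ℕ → ℕ → R} {A : ℤ → ℕ → R}
    (hrun : IsRun m α (fun n i ↦ algebraMap R F (a n i)))
    (hlt : ∀ n, ∀ i ∈ Icc 1 m, ‖α n i - algebraMap R F (a n i)‖ < 1)
    (hconv : IsConvergents m a A)
    (hper : ∀ n : ℕ, ∀ i ∈ Icc 1 m, α (n + N) i = α n i ∧ a (n + N) i = a n i)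
    {M : Matrix (Fin (m + 1)) (Fin (m + 1)) R}
    (hM : ∀ i j : Fin (m + 1), M i j = A ((N : ℤ) - ((j : ℕ) + 1)) ((i : ℕ) + 1)) :
    (∀ z : K, Polynomial.aeval z (M.charpoly.map (algebraMap R F)) = 0 →
      z ≠ algebraMap F K (∏ j ∈ range N, α j 1) → ‖z‖ < 1) ∧
    1 < ‖∏ j ∈ range N, α j 1‖ := by
  have hα : ∀ i ∈ Icc 1 m, α N i = α 0 i := fun i hi ↦ by simpa using (hper 0 i hi).1
  refine ⟨fun z hz hzμ ↦ ?_,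
    hrun.one_lt_norm_prod hN (fun n ↦ hlt n m (by simpa)) (hα 1 (by simpa))⟩
  have : IsUltrametricDist K := IsUltrametricDist.isUltrametricDist_of_forall_norm_natCast_le_one
    fun n ↦ by simpa [← hext] using IsUltrametricDist.norm_natCast_le_one F n
  let φ : R →+* K := (algebraMap F K).comp (algebraMap R F)
  have hroot : (M.map φ).charpoly.IsRoot z := by
    rwa [Matrix.charpoly_map, Polynomial.IsRoot, Polynomial.eval_map, ← Polynomial.eval₂_map]
  obtain ⟨x, hx, hx₀, hxz⟩ := (hconv.map φ).exists_solution_of_isRoot_charpoly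
    (fun i j ↦ congrArg φ (hM i j)) hroot
  exact (hrun.map (algebraMap F K)).norm_lt_one_of_mem_solutions hm hN
    (fun n i hi ↦ by rw [← map_sub, hext]; exact hlt n i hi)
    (fun i hi ↦ congrArg _ (hα i hi)) (fun n i hi ↦ congrArg φ (hper n i hi).2)
    hx hx₀ hxz (map_prod (algebraMap F K) _ _ ▸ hzμ)

/-- For a purely periodic run with period `N`, every root `z ≠ μ` of the
characteristic polynomial `P(X)` in an algebraic closure `K` of `ℚ_p` satisfies `‖z‖ < 1`,
while the dominant root `μ = α₀⁽¹⁾α₁⁽¹⁾⋯α_{N-1}⁽¹⁾` satisfies `|μ|_p > 1`. -/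
theorem jacobiPerron_periodic_roots_norms (p m N : ℕ) [hp : Fact p.Prime]
    (hp2 : 2 < p) (hm : 1 ≤ m) (hN : 1 ≤ N)
    (α : ℕ → ℕ → ℚ_[p]) (a : ℕ → ℕ → ℚ) (A : ℤ → ℕ → ℚ)
    (hrun : JPRun p m α a) (hconv : JPConv m a A)
    (hper : ∀ n : ℕ, ∀ i ∈ Finset.Icc 1 m, α (n + N) i = α n i ∧ a (n + N) i = a n i)
    (M : Matrix (Fin (m + 1)) (Fin (m + 1)) ℚ)
    (hM : ∀ i j : Fin (m + 1), M i j = A ((N : ℤ) - ((j : ℕ) + 1)) ((i : ℕ) + 1))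
    (μ : ℚ_[p]) (hμ : μ = ∏ j ∈ Finset.range N, α j 1)
    (K : Type) [NormedField K] [Algebra ℚ_[p] K] [IsAlgClosure ℚ_[p] K]
    (hext : ∀ x : ℚ_[p], ‖algebraMap ℚ_[p] K x‖ = ‖x‖) :
    (∀ z : K, Polynomial.aeval z ((Matrix.charpoly M).map (algebraMap ℚ ℚ_[p])) = 0 →
      z ≠ algebraMap ℚ_[p] K μ → ‖z‖ < 1) ∧ 1 < ‖μ‖ := by
  subst hμ
  exact jacobiPerron_periodic_roots_norms_general hext hm hN hrun.isRun
    (fun n i hi ↦ ((hrun n).1 i hi).2.2) hconv.isConvergents hper hM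
end

section
/- For an infinite run of the p-adic Jacobi–Perron algorithm with a ℚ-linear dependence relation as above, the sequence (S_n) satisfies: S_n ∈ ℤ for every n ≥ −m, and for every n ≥ 0 the greatest common divisor of S_n, S_{n-1}, …, S_{n-m} is a power of p (i.e. equals p^k for some integer k ≥ 0). -/
open Finset Filter

/-!
The recurrence for the convergents makes `S` a solution of
`S (n + 1) = ∑ a n i * S (n + 1 - i) + S (n - m)` with initial values `S (1 - i) = x i`. Since the
last coefficient is `1`, it can be run in both directions over `ℤ[1/p]`: every window of `m + 1`
consecutive terms generates the same `ℤ[1/p]`-submodule of `ℚ` as `x`. Hence `S` takes values in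
`ℤ[1/p]`, and the gcd of a window is that of `x` up to a unit of `ℤ[1/p]`. On the other hand, the
dependence relation passes from `α n` to `α (n + 1)` and gives
`S (n + 1) = -∑ (α n i - a n i) * S (n + 1 - i)`, so `S` is `p`-adically integral, and
`ℤ[1/p] ∩ ℤ_p = ℤ`.
-/

theorem sum_Icc_one_succ {M : Type*} [AddCommMonoid M] (f : ℕ → M) (m : ℕ) :
    ∑ i ∈ Icc 1 (m + 1), f i = f 1 + ∑ i ∈ Icc 1 m, f (i + 1) := by
  induction m with
  | zero => simp
  | succ m ih => rw [sum_Icc_succ_top (by omega), ih, sum_Icc_succ_top (by omega), add_assoc]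

theorem intCast_gcd_mem_iff {R ι : Type*} [Ring R] (N : AddSubgroup R) (s : Finset ι)
    (f : ι → ℤ) : ((s.gcd f : ℤ) : R) ∈ N ↔ ∀ i ∈ s, (f i : R) ∈ N := by
  have intCast_mul_mem {y z : ℤ} (hy : (y : R) ∈ N) : ((y * z : ℤ) : R) ∈ N := by
    simpa [mul_comm y z] using N.zsmul_mem hy z
  constructor
  · intro h i hi
    obtain ⟨c, hc⟩ := gcd_dvd (f := f) hi
    exact hc ▸ intCast_mul_mem h
  · intro h
    obtain ⟨c, hc⟩ := s.gcd_eq_sum_mul f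
    rw [hc, Int.cast_sum]
    exact N.sum_mem fun i hi => intCast_mul_mem (h i hi)

theorem finset_gcd_nonneg {ι : Type*} (s : Finset ι) (f : ι → ℤ) : 0 ≤ s.gcd f :=
  Int.nonneg_of_normalize_eq_self s.normalize_gcd

theorem gcd_Icc_comp_sub (T : ℤ → ℤ) (c : ℤ) (a b : ℕ) :
    ((Icc a b).gcd fun i : ℕ => T (c - i)) = (Icc (c - b) (c - a)).gcd T := by
  have himage : (Icc a b).image (fun i : ℕ => c - i) = Icc (c - b) (c - a) := by
    ext k
    simp only [mem_image, mem_Icc]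
    exact ⟨fun ⟨i, hi, hik⟩ => by omega, fun hk => ⟨(c - k).toNat, by omega, by omega⟩⟩
  rw [← himage, gcd_image]
  rfl

section ZInvP

/-- The ring `ℤ[1/p]`, as a subring of `ℚ`. -/
def zInvP (p : ℕ) [NeZero p] : Subring ℚ where
  carrier := {q | InZInvP p q}
  one_mem' := ⟨1, 0, by simp⟩
  zero_mem' := ⟨0, 0, by simp⟩
  mul_mem' := by
    rintro _ _ ⟨y, k, rfl⟩ ⟨z, l, rfl⟩
    exact ⟨y * z, k + l, by push_cast; rw [pow_add, div_mul_div_comm]⟩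
  add_mem' := by
    rintro _ _ ⟨y, k, rfl⟩ ⟨z, l, rfl⟩
    have hp0 : (p : ℚ) ≠ 0 := NeZero.ne _
    refine ⟨y * p ^ l + p ^ k * z, k + l, ?_⟩
    push_cast
    rw [pow_add, div_add_div _ _ (pow_ne_zero k hp0) (pow_ne_zero l hp0)]
  neg_mem' := by
    rintro _ ⟨z, k, rfl⟩
    exact ⟨-z, k, by push_cast; rw [neg_div]⟩

variable {p : ℕ} [hp : Fact p.Prime]

theorem exists_eq_intCast_of_mem_zInvP_of_norm_le_one {q : ℚ} (hq : q ∈ zInvP p)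
    (hnorm : ‖(q : ℚ_[p])‖ ≤ 1) : ∃ z : ℤ, q = z := by
  obtain ⟨z, k, rfl⟩ := hq
  have hpk : (p : ℚ) ^ k ≠ 0 := pow_ne_zero k (mod_cast hp.out.ne_zero)
  have hpk' : (0 : ℝ) < (p : ℝ) ^ k := pow_pos (mod_cast hp.out.pos) k
  have hz : ‖(z : ℚ_[p])‖ ≤ (p : ℝ) ^ (-(k : ℤ)) := by
    push_cast at hnorm
    rw [norm_div, norm_pow, Padic.norm_p, inv_pow, div_inv_eq_mul] at hnorm
    rwa [zpow_neg, zpow_natCast, ← one_div, le_div_iff₀ hpk']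
  obtain ⟨w, rfl⟩ := (Padic.norm_int_le_pow_iff_dvd z k).1 hz
  exact ⟨w, by push_cast; rw [mul_div_cancel_left₀ _ hpk]⟩

theorem exists_pow_mul_abs_unit_eq_pow (u : (zInvP p)ˣ) :
    ∃ k l : ℕ, (p : ℚ) ^ k * |((u : zInvP p) : ℚ)| = (p : ℚ) ^ l := by
  have hp0 : (p : ℚ) ≠ 0 := mod_cast hp.out.ne_zero
  obtain ⟨y, k, hy⟩ := (u : zInvP p).2
  obtain ⟨z, l, hz⟩ := ((u⁻¹ : (zInvP p)ˣ) : zInvP p).2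
  have hyz : y * z = (p : ℤ) ^ (k + l) := by
    have huv : ((u : zInvP p) : ℚ) * ((u⁻¹ : (zInvP p)ˣ) : zInvP p) = 1 :=
      congrArg Subtype.val u.mul_inv
    rw [hy, hz, div_mul_div_comm, ← pow_add, div_eq_one_iff_eq (pow_ne_zero _ hp0)] at huv
    exact_mod_cast huv
  have hdvd : y.natAbs ∣ p ^ (k + l) := by
    rw [← Int.natCast_dvd_natCast, Int.natCast_natAbs, abs_dvd]
    exact ⟨z, by rw [hyz]; push_cast; rfl⟩
  obtain ⟨i, -, hi⟩ := (Nat.dvd_prime_pow hp.out).1 hdvd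
  refine ⟨k, i, ?_⟩
  rw [hy, abs_div, abs_of_nonneg (by positivity : (0 : ℚ) ≤ (p : ℚ) ^ k),
    mul_div_cancel₀ _ (pow_ne_zero k hp0), ← Int.cast_abs, ← Int.natCast_natAbs, hi]
  push_cast
  rfl

theorem exists_pow_mul_eq_pow_mul_of_span_eq {g h : ℤ} (hg : 0 ≤ g) (hh : 0 ≤ h)
    (hspan : Submodule.span (zInvP p) {(g : ℚ)} = Submodule.span (zInvP p) {(h : ℚ)}) :
    ∃ k l : ℕ, (p : ℤ) ^ k * g = (p : ℤ) ^ l * h := by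
  obtain ⟨u, hu⟩ := Submodule.span_singleton_eq_span_singleton.1 hspan.symm
  obtain ⟨k, l, hkl⟩ := exists_pow_mul_abs_unit_eq_pow u
  have habs : |((u : zInvP p) : ℚ)| * h = g := by
    have hu' : ((u : zInvP p) : ℚ) * h = g := hu
    rw [← abs_of_nonneg (Int.cast_nonneg hg : (0 : ℚ) ≤ g), ← hu', abs_mul,
      abs_of_nonneg (Int.cast_nonneg hh : (0 : ℚ) ≤ h)]
  refine ⟨k, l, ?_⟩
  have : (p : ℚ) ^ k * g = (p : ℚ) ^ l * h := by rw [← habs, ← mul_assoc, hkl]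
  exact_mod_cast this

theorem exists_eq_pow_of_pow_mul_eq_pow {g : ℤ} (hg : 0 ≤ g) {k l : ℕ}
    (h : (p : ℤ) ^ k * g = (p : ℤ) ^ l) : ∃ i : ℕ, g = (p : ℤ) ^ i := by
  lift g to ℕ using hg
  have hdvd : g ∣ p ^ l := ⟨p ^ k, by rw [mul_comm]; exact_mod_cast h.symm⟩
  obtain ⟨i, -, rfl⟩ := (Nat.dvd_prime_pow hp.out).1 hdvd
  exact ⟨i, Nat.cast_pow p i⟩

end ZInvP

/-- The linear recurrence of order `m + 1` satisfied by the convergents of the Jacobi–Perron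
algorithm with partial quotients `a`, shifted by one so that the term `S (n + 1)` is computed from
the partial quotients of index `n`. -/
def IsJPRecurrence {K : Type*} [Semiring K] (m : ℕ) (a : ℕ → ℕ → K) (S : ℤ → K) : Prop :=
  ∀ n : ℕ, S (n + 1) = ∑ i ∈ Icc 1 m, a n i * S (n + 1 - i) + S (n - m)

/-- The transition rule of the Jacobi–Perron algorithm over an arbitrary field, with no constraint
on how the partial quotients `a` are selected. -/
def IsJPOrbit {K : Type*} [Field K] (m : ℕ) (α a : ℕ → ℕ → K) : Prop :=
  ∀ n : ℕ, α n m ≠ a n m ∧ α (n + 1) 1 = (α n m - a n m)⁻¹ ∧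
    ∀ i ∈ Icc 2 m, α (n + 1) i = (α n (i - 1) - a n (i - 1)) / (α n m - a n m)

theorem forall_of_window {m : ℕ} {P : ℤ → Prop} (init : ∀ k ∈ Icc (-m : ℤ) 0, P k)
    (step : ∀ n : ℕ, (∀ k ∈ Icc (n - m : ℤ) n, P k) → P (n + 1)) :
    ∀ n : ℤ, -(m : ℤ) ≤ n → P n := by
  intro n
  induction n using Int.strongRec (m := 1) with
  | lt n hn => exact fun hmn => init n (mem_Icc.2 ⟨hmn, by omega⟩)
  | ge n hn ih =>
    intro _
    obtain ⟨j, rfl⟩ : ∃ j : ℕ, n = j + 1 := ⟨(n - 1).toNat, by omega⟩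
    refine step j fun k hk => ?_
    rw [mem_Icc] at hk
    exact ih k (by omega) (by omega)

namespace IsJPRecurrence

theorem map {K L : Type*} [Semiring K] [Semiring L] {m : ℕ} {a : ℕ → ℕ → K} {S : ℤ → K}
    (hS : IsJPRecurrence m a S) (f : K →+* L) :
    IsJPRecurrence m (fun n i => f (a n i)) (fun n => f (S n)) := by
  intro n
  simp only [hS n, map_add, map_sum, map_mul]

section Submodule

variable {K : Type*} [CommRing K] {R : Subring K} {m : ℕ} {a : ℕ → ℕ → K} {S : ℤ → K}

theorem sum_mul_mem (ha : ∀ n, ∀ i ∈ Icc 1 m, a n i ∈ R) (N : Submodule R K) (n : ℕ)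
    (hN : ∀ k ∈ Icc (n + 1 - m : ℤ) n, S k ∈ N) :
    ∑ i ∈ Icc 1 m, a n i * S (n + 1 - i) ∈ N := by
  refine N.sum_mem fun i hi => N.smul_mem ⟨a n i, ha n i hi⟩ (hN _ ?_)
  rw [mem_Icc] at hi ⊢
  omega

theorem forall_mem (hS : IsJPRecurrence m a S) (ha : ∀ n, ∀ i ∈ Icc 1 m, a n i ∈ R)
    (N : Submodule R K) (init : ∀ k ∈ Icc (-m : ℤ) 0, S k ∈ N) :
    ∀ n : ℤ, -(m : ℤ) ≤ n → S n ∈ N := by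
  refine forall_of_window init fun n hN => ?_
  rw [hS n]
  refine N.add_mem (sum_mul_mem ha N n fun k hk => hN k ?_) (hN _ ?_) <;>
    rw [mem_Icc] at * <;> omega

theorem forall_mem_subring (hS : IsJPRecurrence m a S) (ha : ∀ n, ∀ i ∈ Icc 1 m, a n i ∈ R)
    (init : ∀ k ∈ Icc (-m : ℤ) 0, S k ∈ R) (n : ℤ) (hn : -(m : ℤ) ≤ n) : S n ∈ R := by
  have mem_one_iff (y : K) : y ∈ (1 : Submodule R K) ↔ y ∈ R := by
    rw [Submodule.mem_one]
    exact ⟨fun ⟨r, hr⟩ => hr ▸ r.2, fun hy => ⟨⟨y, hy⟩, rfl⟩⟩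
  simp only [← mem_one_iff] at init ⊢
  exact hS.forall_mem ha 1 init n hn

theorem window_mem_iff (hS : IsJPRecurrence m a S) (ha : ∀ n, ∀ i ∈ Icc 1 m, a n i ∈ R)
    (N : Submodule R K) (n : ℕ) :
    (∀ k ∈ Icc (n - m : ℤ) n, S k ∈ N) ↔ ∀ k ∈ Icc (-m : ℤ) 0, S k ∈ N := by
  refine ⟨fun hN => ?_, fun init k hk =>
    hS.forall_mem ha N init k (le_trans (by omega) (mem_Icc.1 hk).1)⟩
  induction n with
  | zero => simpa using hN
  | succ n ih =>
    push_cast at hN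
    refine ih fun k hk => ?_
    rw [mem_Icc] at hk
    rcases hk.1.eq_or_lt with rfl | hlt
    · have hlast : S (n - m) = S (n + 1) - ∑ i ∈ Icc 1 m, a n i * S (n + 1 - i) :=
        eq_sub_of_add_eq' (hS n).symm
      rw [hlast]
      refine N.sub_mem (hN _ ?_) (sum_mul_mem ha N n fun k hk => hN k ?_) <;>
        rw [mem_Icc] at * <;> omega
    · exact hN k (mem_Icc.2 (by omega))

theorem span_gcd_window_eq (hS : IsJPRecurrence m a S) (ha : ∀ n, ∀ i ∈ Icc 1 m, a n i ∈ R)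
    {T : ℤ → ℤ} (hT : ∀ n : ℤ, -(m : ℤ) ≤ n → S n = T n) (n : ℕ) :
    Submodule.span R {(((Icc (n - m : ℤ) n).gcd T : ℤ) : K)} =
      Submodule.span R {(((Icc (-m : ℤ) 0).gcd T : ℤ) : K)} := by
  have gcd_mem_iff (N : Submodule R K) :
      (((Icc (n - m : ℤ) n).gcd T : ℤ) : K) ∈ N ↔ (((Icc (-m : ℤ) 0).gcd T : ℤ) : K) ∈ N := by
    calc (((Icc (n - m : ℤ) n).gcd T : ℤ) : K) ∈ N
      _ ↔ ∀ k ∈ Icc (n - m : ℤ) n, (T k : K) ∈ N :=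
        intCast_gcd_mem_iff N.toAddSubgroup _ _
      _ ↔ ∀ k ∈ Icc (n - m : ℤ) n, S k ∈ N := by
        refine forall₂_congr fun k hk => ?_
        rw [hT k (le_trans (by omega) (mem_Icc.1 hk).1)]
      _ ↔ ∀ k ∈ Icc (-m : ℤ) 0, S k ∈ N := hS.window_mem_iff ha N n
      _ ↔ ∀ k ∈ Icc (-m : ℤ) 0, (T k : K) ∈ N :=
        forall₂_congr fun k hk => by rw [hT k (mem_Icc.1 hk).1]
      _ ↔ (((Icc (-m : ℤ) 0).gcd T : ℤ) : K) ∈ N :=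
        (intCast_gcd_mem_iff N.toAddSubgroup _ _).symm
  refine le_antisymm ?_ ?_ <;> rw [Submodule.span_singleton_le_iff_mem]
  · exact (gcd_mem_iff _).2 (Submodule.mem_span_singleton_self _)
  · exact (gcd_mem_iff _).1 (Submodule.mem_span_singleton_self _)

end Submodule

section Relation

variable {K : Type*} {m : ℕ} {α a : ℕ → ℕ → K} {S : ℤ → K}

theorem eq_neg_sum_of_relation [CommRing K] (hS : IsJPRecurrence m a S) {n : ℕ}
    (hrel : ∑ i ∈ Icc 1 m, S (n + 1 - i) * α n i + S (n - m) = 0) :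
    S (n + 1) = -∑ i ∈ Icc 1 m, (α n i - a n i) * S (n + 1 - i) := by
  have hsplit : ∑ i ∈ Icc 1 m, (α n i - a n i) * S (n + 1 - i) =
      ∑ i ∈ Icc 1 m, S (n + 1 - i) * α n i - ∑ i ∈ Icc 1 m, a n i * S (n + 1 - i) := by
    rw [← sum_sub_distrib]
    exact sum_congr rfl fun i _ => by ring
  rw [hS n, hsplit]
  linear_combination hrel

theorem relation_succ [Field K] (hS : IsJPRecurrence m a S) (hα : IsJPOrbit m α a)
    {n : ℕ} (hrel : ∑ i ∈ Icc 1 m, S (n + 1 - i) * α n i + S (n - m) = 0) :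
    ∑ i ∈ Icc 1 m, S (n + 2 - i) * α (n + 1) i + S (n + 1 - m) = 0 := by
  obtain ⟨hne, hfirst, hrest⟩ := hα n
  have htail := hS.eq_neg_sum_of_relation hrel
  cases m with
  | zero => simpa using htail
  | succ m =>
    rw [sum_Icc_succ_top (by omega)] at htail
    obtain ⟨δ, hδ⟩ : ∃ δ : ℕ → K, ∀ i, α n i - a n i = δ i := ⟨_, fun _ => rfl⟩
    simp only [hδ] at hfirst hrest htail
    have hδ_ne : δ (m + 1) ≠ 0 := hδ (m + 1) ▸ sub_ne_zero.2 hne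
    have hshift : ∑ i ∈ Icc 1 m, S (n + 2 - (i + 1 : ℕ)) * α (n + 1) (i + 1) =
        (∑ i ∈ Icc 1 m, δ i * S (n + 1 - i)) / δ (m + 1) := by
      rw [sum_div]
      refine sum_congr rfl fun i hi => ?_
      rw [mem_Icc] at hi
      rw [hrest (i + 1) (mem_Icc.2 (by omega)), Nat.add_sub_cancel,
        show (n + 2 - (i + 1 : ℕ) : ℤ) = n + 1 - i by push_cast; ring, mul_div_left_comm,
        mul_div_assoc', mul_div_right_comm]
    rw [sum_Icc_one_succ, hshift, hfirst,
      show (n + 2 - (1 : ℕ) : ℤ) = n + 1 by push_cast; ring, htail]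
    field_simp
    ring

theorem relation [Field K] (hS : IsJPRecurrence m a S) (hα : IsJPOrbit m α a)
    (init : ∑ i ∈ Icc 1 m, S (1 - i) * α 0 i + S (-m) = 0) (n : ℕ) :
    ∑ i ∈ Icc 1 m, S (n + 1 - i) * α n i + S (n - m) = 0 := by
  induction n with
  | zero => simpa using init
  | succ n ih => simpa [add_assoc] using hS.relation_succ hα ih

theorem norm_le_one [NormedField K] [IsUltrametricDist K] (hS : IsJPRecurrence m a S)
    (hα : IsJPOrbit m α a) (hle : ∀ n, ∀ i ∈ Icc 1 m, ‖α n i - a n i‖ ≤ 1)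
    (hrel : ∑ i ∈ Icc 1 m, S (1 - i) * α 0 i + S (-m) = 0)
    (init : ∀ k ∈ Icc (-m : ℤ) 0, ‖S k‖ ≤ 1) : ∀ n : ℤ, -(m : ℤ) ≤ n → ‖S n‖ ≤ 1 := by
  refine forall_of_window init fun n hN => ?_
  rw [hS.eq_neg_sum_of_relation (hS.relation hα hrel n), norm_neg]
  refine IsUltrametricDist.norm_sum_le_of_forall_le_of_nonneg zero_le_one fun i hi => ?_
  rw [norm_mul]
  refine mul_le_one₀ (hle n i hi) (norm_nonneg _) (hN _ ?_)
  rw [mem_Icc] at hi ⊢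
  omega

end Relation

theorem exists_eq_intCast {p : ℕ} [Fact p.Prime] {m : ℕ} {α : ℕ → ℕ → ℚ_[p]} {a : ℕ → ℕ → ℚ}
    {S : ℤ → ℚ} (hS : IsJPRecurrence m a S) (ha : ∀ n, ∀ i ∈ Icc 1 m, a n i ∈ zInvP p)
    (hα : IsJPOrbit m α fun n i => (a n i : ℚ_[p]))
    (hle : ∀ n, ∀ i ∈ Icc 1 m, ‖α n i - (a n i : ℚ_[p])‖ ≤ 1)
    (hrel : ∑ i ∈ Icc 1 m, (S (1 - i) : ℚ_[p]) * α 0 i + (S (-m) : ℚ_[p]) = 0)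
    (init : ∀ k ∈ Icc (-m : ℤ) 0, ∃ z : ℤ, S k = z) (n : ℤ) (hn : -(m : ℤ) ≤ n) :
    ∃ z : ℤ, S n = z := by
  have hmem : S n ∈ zInvP p := by
    refine hS.forall_mem_subring ha (fun k hk => ?_) n hn
    obtain ⟨z, hz⟩ := init k hk
    exact hz ▸ intCast_mem (zInvP p) z
  have hnorm : ‖(S n : ℚ_[p])‖ ≤ 1 := by
    refine (hS.map (Rat.castHom ℚ_[p])).norm_le_one hα hle hrel (fun k hk => ?_) n hn
    obtain ⟨z, hz⟩ := init k hk
    simpa [hz] using Padic.norm_int_le_one z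
  exact exists_eq_intCast_of_mem_zInvP_of_norm_le_one hmem hnorm

end IsJPRecurrence

namespace JPConv

variable {m : ℕ} {a : ℕ → ℕ → ℚ} {A : ℤ → ℕ → ℚ}

theorem sum_mul_apply_neg (hconv : JPConv m a A) (x : ℕ → ℚ) {j : ℕ} (hj : j ∈ Icc 1 (m + 1)) :
    ∑ i ∈ Icc 1 (m + 1), x i * A (-j) i = x j := by
  rw [sum_eq_single_of_mem j hj fun i hi hij => by rw [hconv.1 i hi j hj, if_neg hij, mul_zero],
    hconv.1 j hj j hj, if_pos rfl, mul_one]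

theorem isJPRecurrence (hconv : JPConv m a A) (x : ℕ → ℚ) :
    IsJPRecurrence m a fun n => ∑ i ∈ Icc 1 (m + 1), x i * A (n - 1) i := by
  intro n
  simp only [mul_sum]
  rw [sum_comm, ← sum_add_distrib]
  refine sum_congr rfl fun i hi => ?_
  rw [add_sub_cancel_right, hconv.2 n i hi, mul_add, mul_sum]
  congr 1
  refine sum_congr rfl fun j _ => ?_
  rw [show (n + 1 - j - 1 : ℤ) = n - j by ring]
  ring

end JPConv

theorem jacobiPerron_S_integral_gcd_general (p m : ℕ) [Fact p.Prime]
    (α : ℕ → ℕ → ℚ_[p]) (a : ℕ → ℕ → ℚ) (A : ℤ → ℕ → ℚ)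
    (ha : ∀ n, ∀ i ∈ Icc 1 m, InZInvP p (a n i))
    (hle : ∀ n, ∀ i ∈ Icc 1 m, ‖α n i - (a n i : ℚ_[p])‖ ≤ 1)
    (horbit : IsJPOrbit m α fun n i => (a n i : ℚ_[p])) (hconv : JPConv m a A) (x : ℕ → ℤ)
    (hdep : ∑ i ∈ Icc 1 m, ((x i : ℚ) : ℚ_[p]) * α 0 i + ((x (m + 1) : ℤ) : ℚ_[p]) = 0)
    (S : ℤ → ℚ) (hS : ∀ n : ℤ, S n = ∑ i ∈ Icc 1 (m + 1), (x i : ℚ) * A (n - 1) i) :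
    ∃ T : ℤ → ℤ, (∀ n : ℤ, -(m : ℤ) ≤ n → S n = (T n : ℚ)) ∧
      ∀ n : ℤ, 0 ≤ n → ∃ k l : ℕ,
        (p : ℤ) ^ k * (range (m + 1)).gcd (fun j => T (n - (j : ℤ))) =
          (p : ℤ) ^ l * (Icc 1 (m + 1)).gcd x := by
  have hrec : IsJPRecurrence m a S := funext hS ▸ hconv.isJPRecurrence fun i => (x i : ℚ)
  have hinit (i : ℕ) (hi : i ∈ Icc 1 (m + 1)) : S (1 - i) = x i := by
    rw [hS, sub_sub_cancel_left, hconv.sum_mul_apply_neg (fun i => (x i : ℚ)) hi]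
  have hinit_int (k : ℤ) (hk : k ∈ Icc (-m : ℤ) 0) : ∃ z : ℤ, S k = z := by
    rw [mem_Icc] at hk
    refine ⟨x (1 - k).toNat, ?_⟩
    rw [← hinit _ (mem_Icc.2 (by omega))]
    congr 1
    omega
  have hrel : ∑ i ∈ Icc 1 m, (S (1 - i) : ℚ_[p]) * α 0 i + (S (-m) : ℚ_[p]) = 0 := by
    rw [← hdep, show (-m : ℤ) = 1 - (m + 1 : ℕ) by push_cast; ring,
      hinit (m + 1) (mem_Icc.2 (by omega)), Rat.cast_intCast]
    congr 1
    refine sum_congr rfl fun i hi => ?_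
    rw [hinit i (Icc_subset_Icc_right m.le_succ hi)]
  choose! T hT using hrec.exists_eq_intCast ha horbit hle hrel hinit_int
  have hgcd_init : (Icc (-m : ℤ) 0).gcd T = (Icc 1 (m + 1)).gcd x := by
    have hTx (i : ℕ) (hi : i ∈ Icc 1 (m + 1)) : T (1 - i) = x i := by
      have hmi : (-m : ℤ) ≤ 1 - i := by rw [mem_Icc] at hi; omega
      exact_mod_cast (hT _ hmi).symm.trans (hinit i hi)
    rw [← gcd_congr rfl hTx, gcd_Icc_comp_sub]
    simp
  refine ⟨T, hT, fun n hn => ?_⟩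
  lift n to ℕ using hn
  rw [Nat.range_succ_eq_Icc_zero, gcd_Icc_comp_sub, Nat.cast_zero, sub_zero, ← hgcd_init]
  exact exists_pow_mul_eq_pow_mul_of_span_eq (finset_gcd_nonneg _ _) (finset_gcd_nonneg _ _)
    (hrec.span_gcd_window_eq ha hT n)

/-- For an infinite run with a `ℚ`-linear dependence relation with coprime
integer coefficients, `Sₙ ∈ ℤ` for every `n ≥ -m`, and for every `n ≥ 0` the gcd of
`Sₙ, S_{n-1}, …, S_{n-m}` is a power of `p`. -/
theorem jacobiPerron_S_integral_gcd (p m : ℕ) [hp : Fact p.Prime]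
    (hp2 : 2 < p) (hm : 1 ≤ m)
    (α : ℕ → ℕ → ℚ_[p]) (a : ℕ → ℕ → ℚ) (A : ℤ → ℕ → ℚ)
    (hrun : JPRun p m α a) (hconv : JPConv m a A)
    (x : ℕ → ℤ) (hgcd : Finset.gcd (Finset.Icc 1 (m + 1)) x = 1)
    (hdep : (∑ i ∈ Finset.Icc 1 m, ((x i : ℚ) : ℚ_[p]) * α 0 i) + ((x (m + 1) : ℤ) : ℚ_[p]) = 0)
    (S : ℤ → ℚ)
    (hS : ∀ n : ℤ, S n = ∑ i ∈ Finset.Icc 1 (m + 1), (x i : ℚ) * A (n - 1) i) :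
    ∃ T : ℤ → ℤ, (∀ n : ℤ, -(m : ℤ) ≤ n → S n = (T n : ℚ)) ∧
      ∀ n : ℤ, 0 ≤ n → ∃ k : ℕ,
        Finset.gcd (Finset.range (m + 1)) (fun j => T (n - (j : ℤ))) = (p : ℤ) ^ k := by
  obtain ⟨T, hT, hgcdT⟩ := jacobiPerron_S_integral_gcd_general p m α a A
    (fun n i hi => ((hrun n).1 i hi).1) (fun n i hi => ((hrun n).1 i hi).2.2.le)
    (fun n => (hrun n).2) hconv x hdep S hS
  refine ⟨T, hT, fun n hn => ?_⟩
  obtain ⟨k, l, hkl⟩ := hgcdT n hn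
  exact exists_eq_pow_of_pow_mul_eq_pow (finset_gcd_nonneg _ _) (by rw [hkl, hgcd, mul_one])
end
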